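/- arXiv:math/0607134 — 2 statements merged into one kernel-verified Lean document; each statement's English description precedes it below -/
import Mathlib

section
/- Let ν be a tempered distribution on ℝ^n that is ℤ^n-periodic (ν(f(·+m)) = ν(f) for all m ∈ ℤ^n) and satisfies ν(e^{4πik m·x} f) = ν(f) for all m ∈ ℤ^n and all Schwartz f, where k is a positive integer. Then ν is a linear combination of the distributions ν_j, j ∈ A_k = {0,...,2k-1}^n, where ν_j(f) = Σ_{m∈ℤ^n} f̂(2km+j). Consequently the space of such distributions has dimension (2k)^n. -/
/-!
The proof localizes `T` with a smooth compactly supported `χ` satisfying `∑ₘ χ(x + m) = 1`.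
In the Schwartz space `f = ∑ₘ f · χ(· + m)`, and by periodicity `T` takes the same value on
`f · χ(· - m)` and on its translate `f(· + m) · χ`. Hence `T f = T (χ · Pf)`, where
`Pf(x) = ∑ₘ f(x + m)` is the periodization (`hasSum_fhat_mul_coeff`). Poisson summation
(`hasSum_poisson`) expands `Pf(x) = ∑ₘ f̂(m) e^{2πi m·x}`; as `f̂(m)` decays rapidly while the
seminorms of `e^{2πi m·x} χ` grow polynomially in `m`, the expansion of `χ · Pf` converges in the
Schwartz space, so `T f = ∑ₘ f̂(m) cₘ` with `cₘ = T (e^{2πi m·x} χ)`. No structure theorem for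
periodic distributions is needed: the coefficients are read off from `T` and `χ` directly.

Invariance under modulation by `e^{4πik l·x}` says `c_{m + 2kl} = cₘ` (`coeff_periodic`), and
grouping the sum by residues modulo `2k` (`hasSum_residues`) gives `T = ∑ⱼ cⱼ νⱼ`.

The `νⱼ` are linearly independent, because the Fourier transform of `e^{2πi r·x} χ` at an integer
point `m` is `δ_{m,r}` (`fhat_test`), so that these functions are dual to the `νⱼ`. The dimension
is therefore the number `(2k)^n` of indices.

Convergence in the Schwartz space is always obtained from `exists_hasSum_schwartz`: a family all of
whose seminorms are summable has a sum in the Schwartz space, and this sum is the pointwise one.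
-/

open scoped BigOperators Real
open MeasureTheory

noncomputable section

def dot {n : ℕ} (x u : Fin n → ℝ) : ℝ := ∑ i, x i * u i

def fhat {n : ℕ} (f : (Fin n → ℝ) → ℂ) (η : Fin n → ℝ) : ℂ :=
  ∫ x : Fin n → ℝ, f x * Complex.exp (-2 * π * Complex.I * dot x η)

/-- `ν_j` regarded as a functional on Schwartz functions. -/
def nuFun {n : ℕ} (k : ℕ) (j : Fin n → Fin (2 * k)) :
    SchwartzMap (Fin n → ℝ) ℂ → ℂ := fun f =>
  ∑' m : Fin n → ℤ, fhat (⇑f) (fun i => ((2 * (k : ℤ) * m i + (j i : ℤ) : ℤ) : ℝ))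

section

open SchwartzMap Filter Topology
open scoped SchwartzMap

/-! ### Summable families of Schwartz functions -/

/-- A family of Schwartz functions whose seminorms are all summable has a sum in the Schwartz
space, and that sum is computed pointwise. The seminorms of the remainders are bounded by the tails
of the series of seminorms. -/
theorem exists_hasSum_schwartz {E : Type*} [NormedAddCommGroup E] [NormedSpace ℝ E] {ι : Type*}
    (F : ι → 𝓢(E, ℂ)) (h : ∀ k l, Summable fun i => SchwartzMap.seminorm ℂ k l (F i)) :
    ∃ g : 𝓢(E, ℂ), HasSum F g ∧ ∀ x, HasSum (fun i => F i x) (g x) := by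
  have hsm : ∀ i, ContDiff ℝ ((⊤ : ℕ∞) : WithTop ℕ∞) (F i) := fun i => (F i).smooth ⊤
  have hb : ∀ (l : ℕ) (i : ι) (x : E), (l : ℕ∞) ≤ (⊤ : ℕ∞) →
      ‖iteratedFDeriv ℝ l (F i) x‖ ≤ SchwartzMap.seminorm ℂ 0 l (F i) := fun l i x _ =>
    norm_iteratedFDeriv_le_seminorm ℂ (F i) l x
  have hD : ∀ (l : ℕ) (x : E), iteratedFDeriv ℝ l (fun y => ∑' i, F i y) x
      = ∑' i, iteratedFDeriv ℝ l (F i) x := fun l x =>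
    iteratedFDeriv_tsum_apply hsm (fun l _ => h 0 l) hb le_top x
  have hDs : ∀ (l : ℕ) (x : E), Summable fun i => iteratedFDeriv ℝ l (F i) x := fun l x =>
    .of_norm_bounded (h 0 l) fun i => hb l i x le_top
  -- the estimate for arbitrary subfamilies gives both the decay of the sum and the tail bound
  have hest : ∀ (k l : ℕ) (x : E) (s : Set ι),
      ‖x‖ ^ k * ‖∑' i : s, iteratedFDeriv ℝ l (F i) x‖
        ≤ ∑' i : s, SchwartzMap.seminorm ℂ k l (F i) := by
    intro k l x s
    have hn : Summable fun i : s => ‖iteratedFDeriv ℝ l (F i) x‖ :=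
      (Summable.of_nonneg_of_le (fun _ => norm_nonneg _) (fun i => hb l i x le_top)
        (h 0 l)).subtype s
    calc ‖x‖ ^ k * ‖∑' i : s, iteratedFDeriv ℝ l (F i) x‖
        ≤ ‖x‖ ^ k * ∑' i : s, ‖iteratedFDeriv ℝ l (F i) x‖ := by
          gcongr; exact norm_tsum_le_tsum_norm hn
      _ = ∑' i : s, ‖x‖ ^ k * ‖iteratedFDeriv ℝ l (F i) x‖ := tsum_mul_left.symm
      _ ≤ _ := (hn.mul_left _).tsum_le_tsum (fun i => le_seminorm ℂ k l (F i) x)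
          ((h k l).subtype s)
  let g : 𝓢(E, ℂ) :=
    { toFun := fun x => ∑' i, F i x
      smooth' := contDiff_tsum hsm (fun l _ => h 0 l) hb
      decay' := fun k l => ⟨∑' i, SchwartzMap.seminorm ℂ k l (F i), fun x => by
        have := hest k l x Set.univ
        rw [tsum_univ (fun i => iteratedFDeriv ℝ l (F i) x),
          tsum_univ (fun i => SchwartzMap.seminorm ℂ k l (F i))] at this
        rwa [hD]⟩ }
  refine ⟨g, ?_, fun x => ?_⟩
  · refine ((schwartz_withSeminorms ℂ E ℂ).tendsto_nhds _ _).2 ?_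
    rintro ⟨k, l⟩ ε hε
    filter_upwards [(tendsto_tsum_compl_atTop_zero
      fun i => SchwartzMap.seminorm ℂ k l (F i)).eventually_lt_const hε] with s hs
    refine lt_of_le_of_lt ?_ hs
    rw [schwartzSeminormFamily_apply, map_sub_rev]
    refine seminorm_le_bound ℂ k l _ (tsum_nonneg fun i => apply_nonneg _ _) fun x => ?_
    have hsub : iteratedFDeriv ℝ l (⇑(g - ∑ i ∈ s, F i)) x
        = ∑' i : {i // i ∉ s}, iteratedFDeriv ℝ l (F i) x := by
      have e1 : (⇑(g - ∑ i ∈ s, F i)) = (⇑g) - fun y => ∑ i ∈ s, F i y := by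
        ext y; simp
      rw [e1, iteratedFDeriv_sub_apply ((g.smooth l).contDiffAt)
        ((ContDiff.sum fun i _ => (F i).smooth l).contDiffAt),
        iteratedFDeriv_fun_sum_apply (fun i _ => ((F i).smooth l).contDiffAt)]
      rw [show iteratedFDeriv ℝ l g x = _ from hD l x, ← (hDs l x).sum_add_tsum_subtype_compl s]
      simp
    rw [hsub]
    exact hest k l x {i | i ∉ s}
  · have : Summable fun i => F i x :=
      .of_norm_bounded (h 0 0) fun i => norm_le_seminorm ℂ (F i) x
    exact this.hasSum

/-- If the derivatives of `g` up to order `l` are bounded by `B (1 + ‖x‖)^N`, then the seminorm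
`p_{k,l}(g f)` is at most a multiple of `B` that depends only on `f`, `k`, `l` and `N`. -/
theorem seminorm_smulLeft_le {E : Type*} [NormedAddCommGroup E] [NormedSpace ℝ E]
    (f : 𝓢(E, ℂ)) (k l N : ℕ) :
    ∃ C : ℝ, 0 ≤ C ∧ ∀ g : E → ℂ, g.HasTemperateGrowth → ∀ B : ℝ, 0 ≤ B →
      (∀ i ≤ l, ∀ x, ‖iteratedFDeriv ℝ i g x‖ ≤ B * (1 + ‖x‖) ^ N) →
      SchwartzMap.seminorm ℂ k l (smulLeftCLM ℂ g f) ≤ C * B := by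
  set M : ℝ := 2 ^ (N + k) * ((Finset.Iic ((N + k, l) : ℕ × ℕ)).sup
    fun m => SchwartzMap.seminorm ℂ m.1 m.2) f with hM
  have hM0 : 0 ≤ M := by positivity
  refine ⟨2 ^ l * M, by positivity, fun g hg B hB h => ?_⟩
  refine seminorm_le_bound ℂ k l _ (by positivity) fun x => ?_
  have e : ⇑(smulLeftCLM ℂ g f) = fun y => g y * f y := by
    ext y; simp [smulLeftCLM_apply_apply hg]
  rw [e]
  calc ‖x‖ ^ k * ‖iteratedFDeriv ℝ l (fun y => g y * f y) x‖
      ≤ ‖x‖ ^ k * ∑ i ∈ Finset.range (l + 1), (l.choose i : ℝ) * ‖iteratedFDeriv ℝ i g x‖ *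
          ‖iteratedFDeriv ℝ (l - i) f x‖ := by
        gcongr
        exact norm_iteratedFDeriv_mul_le (N := l) (hg.1.of_le (by exact_mod_cast le_top))
          (f.smooth l) x le_rfl
    _ = ∑ i ∈ Finset.range (l + 1), (l.choose i : ℝ) * (‖iteratedFDeriv ℝ i g x‖ *
          (‖x‖ ^ k * ‖iteratedFDeriv ℝ (l - i) f x‖)) := by
        rw [Finset.mul_sum]; exact Finset.sum_congr rfl fun i _ => by ring
    _ ≤ ∑ i ∈ Finset.range (l + 1), (l.choose i : ℝ) * (B * M) := by
        refine Finset.sum_le_sum fun i hi => mul_le_mul_of_nonneg_left ?_ (Nat.cast_nonneg _)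
        calc ‖iteratedFDeriv ℝ i g x‖ * (‖x‖ ^ k * ‖iteratedFDeriv ℝ (l - i) f x‖)
            ≤ (B * (1 + ‖x‖) ^ N) * ((1 + ‖x‖) ^ k * ‖iteratedFDeriv ℝ (l - i) f x‖) := by
              gcongr
              · exact h i (by simpa [Nat.lt_succ_iff] using hi) x
              · linarith
          _ = B * ((1 + ‖x‖) ^ (N + k) * ‖iteratedFDeriv ℝ (l - i) f x‖) := by ring
          _ ≤ B * M := by
              gcongr
              exact one_add_le_sup_seminorm_apply (𝕜 := ℂ) (m := (N + k, l)) le_rfl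
                (Nat.sub_le _ _) f x
    _ = 2 ^ l * M * B := by
        rw [← Finset.sum_mul, ← Nat.cast_sum, Nat.sum_range_choose]; push_cast; ring

/-! ### Integer translations and characters -/

/-- Real coordinates of an integer vector. -/
def intVec {n : ℕ} (m : Fin n → ℤ) : Fin n → ℝ := fun i => (m i : ℝ)

theorem norm_intVec {n : ℕ} (m : Fin n → ℤ) : ‖intVec m‖ = ‖m‖ := by
  simp only [Pi.norm_def, intVec]
  congr 2

theorem summable_intVec (n N : ℕ) (hN : n < N) :
    Summable fun m : Fin n → ℤ => ((1 + ‖intVec m‖) ^ N)⁻¹ := by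
  let L := Submodule.span ℤ (Set.range (Pi.basisFun ℝ (Fin n)))
  have hmem : ∀ m : Fin n → ℤ, intVec m ∈ L := fun m =>
    ((Pi.basisFun ℝ (Fin n)).mem_span_iff_repr_mem ℤ _).2 fun i => ⟨m i, by simp [intVec]⟩
  have hr : Module.finrank ℤ L < N := by
    rw [ZLattice.rank ℝ L]; simpa using hN
  have h1 := ZLattice.summable_norm_pow_inv L N hr
  have hinj : Function.Injective fun m : Fin n → ℤ => (⟨intVec m, hmem m⟩ : L) := by
    intro a b hab
    ext i
    have := congrFun (congrArg Subtype.val hab) i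
    simpa [intVec] using this
  have h2 := h1.comp_injective hinj
  refine Summable.of_norm_bounded_eventually (g := fun m => ‖intVec m‖⁻¹ ^ N)
    (h2.congr fun m => by simp) ?_
  filter_upwards [(Set.finite_singleton (0 : Fin n → ℤ)).compl_mem_cofinite] with m hm
  have hpos : 0 < ‖intVec m‖ := by
    rw [norm_intVec]; exact norm_pos_iff.2 (by simpa using hm)
  rw [Real.norm_of_nonneg (by positivity), inv_pow]
  gcongr
  linarith

/-- The character `x ↦ e^{2πi m·x}` of `ℝ^n`. -/
def expo {n : ℕ} (m : Fin n → ℤ) : (Fin n → ℝ) → ℂ := fun x =>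
  Complex.exp (2 * π * Complex.I * ∑ i, (m i : ℂ) * (x i : ℂ))

theorem norm_iteratedFDeriv_cexp_le (i : ℕ) (s : ℝ) :
    ‖iteratedFDeriv ℝ i (fun s : ℝ => Complex.exp (Complex.I * s)) s‖ ≤ 1 := by
  have h : ∀ i : ℕ, iteratedDeriv i (fun s : ℝ => Complex.exp (Complex.I * s))
      = fun s : ℝ => Complex.I ^ i * Complex.exp (Complex.I * s) := by
    intro i
    induction i with
    | zero => simp
    | succ i ih =>
      rw [iteratedDeriv_succ, ih]
      ext s
      have h1 : HasDerivAt (fun s : ℝ => Complex.I * (s : ℂ)) Complex.I s := by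
        simpa using (Complex.ofRealCLM.hasDerivAt (x := s)).const_mul Complex.I
      rw [(h1.cexp.const_mul (Complex.I ^ i)).deriv]
      ring
  rw [norm_iteratedFDeriv_eq_norm_iteratedDeriv, h]
  simp [mul_comm Complex.I, Complex.norm_exp_ofReal_mul_I]

/-- Since `expo m` is `s ↦ e^{is}` composed with a linear form of norm at most `2πn‖m‖`, its
derivatives of order `i` are bounded by the `i`-th power of that number. -/
theorem expo_bound {n : ℕ} (m : Fin n → ℤ) :
    ContDiff ℝ ((⊤ : ℕ∞) : WithTop ℕ∞) (expo m) ∧ ∀ i x,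
      ‖iteratedFDeriv ℝ i (expo m) x‖ ≤ (2 * π * n * ‖intVec m‖) ^ i := by
  let L : (Fin n → ℝ) →L[ℝ] ℝ :=
    (2 * π) • ∑ i, (m i : ℝ) • ContinuousLinearMap.proj (R := ℝ) (φ := fun _ : Fin n => ℝ) i
  have hL : ‖L‖ ≤ 2 * π * n * ‖intVec m‖ := by
    refine L.opNorm_le_bound (by positivity) fun x => ?_
    have : L x = (2 * π) * ∑ i, (m i : ℝ) * x i := by simp [L]
    rw [this, norm_mul, Real.norm_of_nonneg (by positivity : 0 ≤ 2 * π)]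
    have h2 : ‖∑ i, (m i : ℝ) * x i‖ ≤ ∑ _i : Fin n, ‖intVec m‖ * ‖x‖ := by
      refine (norm_sum_le _ _).trans (Finset.sum_le_sum fun i _ => ?_)
      rw [norm_mul]
      gcongr
      · exact norm_le_pi_norm (intVec m) i
      · exact norm_le_pi_norm x i
    calc 2 * π * ‖∑ i, (m i : ℝ) * x i‖ ≤ 2 * π * ∑ _i : Fin n, ‖intVec m‖ * ‖x‖ := by gcongr
      _ = _ := by simp; ring
  have he : expo m = (fun s : ℝ => Complex.exp (Complex.I * s)) ∘ L := by
    ext x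
    simp only [expo, Function.comp, L]
    congr 1
    simp
    ring
  have hg : ContDiff ℝ ((⊤ : ℕ∞) : WithTop ℕ∞) fun s : ℝ => Complex.exp (Complex.I * s) :=
    (contDiff_const.mul Complex.ofRealCLM.contDiff).cexp
  refine ⟨he ▸ hg.comp L.contDiff, fun i x => ?_⟩
  rw [he, L.iteratedFDeriv_comp_right hg x (by exact_mod_cast le_top)]
  refine (ContinuousMultilinearMap.norm_compContinuousLinearMap_le _ _).trans ?_
  rw [Finset.prod_const, Finset.card_univ, Fintype.card_fin]
  calc _ ≤ 1 * ‖L‖ ^ i := by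
        gcongr; exact norm_iteratedFDeriv_cexp_le i _
    _ ≤ _ := by rw [one_mul]; gcongr

theorem expo_temperate {n : ℕ} (m : Fin n → ℤ) : (expo m).HasTemperateGrowth :=
  ⟨(expo_bound m).1, fun i => ⟨0, _, fun x => by simpa using (expo_bound m).2 i x⟩⟩

/-- The seminorms of `e^{2πi m·x} f` grow at most polynomially in `m`. -/
theorem seminorm_expo_le {n : ℕ} (f : 𝓢(Fin n → ℝ, ℂ)) (k l : ℕ) :
    ∃ C : ℝ, ∀ m : Fin n → ℤ,
      SchwartzMap.seminorm ℂ k l (smulLeftCLM ℂ (expo m) f) ≤ C * (1 + ‖intVec m‖) ^ l := by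
  obtain ⟨C, hC, h⟩ := seminorm_smulLeft_le f k l 0
  refine ⟨C * (1 + 2 * π * n) ^ l, fun m => ?_⟩
  rw [mul_assoc, ← mul_pow]
  refine h _ (expo_temperate m) _ (by positivity) fun i hi x => ?_
  rw [pow_zero, mul_one]
  have h0 : 0 ≤ 2 * π * n := by positivity
  have h1 := norm_nonneg (intVec m)
  calc _ ≤ (2 * π * n * ‖intVec m‖) ^ i := (expo_bound m).2 i x
    _ ≤ ((1 + 2 * π * n) * (1 + ‖intVec m‖)) ^ i := by gcongr <;> linarith
    _ ≤ _ := pow_le_pow_right₀ (by nlinarith) hi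

/-- Peetre's inequality, in the form needed to compare the decay of a Schwartz function at
`x + m` with its decay at `x` and at `m`. -/
theorem translate_bound {n : ℕ} (g : 𝓢(Fin n → ℝ, ℂ)) (l N : ℕ) :
    ∃ M : ℝ, 0 ≤ M ∧ ∀ m : Fin n → ℤ, ∀ i ≤ l, ∀ x,
      ‖iteratedFDeriv ℝ i g (x + intVec m)‖
        ≤ M * ((1 + ‖intVec m‖) ^ N)⁻¹ * (1 + ‖x‖) ^ N := by
  set M : ℝ := 2 ^ N * ((Finset.Iic ((N, l) : ℕ × ℕ)).sup
    fun m => SchwartzMap.seminorm ℂ m.1 m.2) g with hM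
  refine ⟨M, by positivity, fun m i hi x => ?_⟩
  have h1 : (1 + ‖x + intVec m‖) ^ N * ‖iteratedFDeriv ℝ i g (x + intVec m)‖ ≤ M :=
    one_add_le_sup_seminorm_apply (𝕜 := ℂ) (m := (N, l)) le_rfl hi g _
  have h2 : 1 + ‖intVec m‖ ≤ (1 + ‖x + intVec m‖) * (1 + ‖x‖) := by
    have : ‖intVec m‖ ≤ ‖x + intVec m‖ + ‖x‖ := by
      simpa using norm_sub_le (x + intVec m) x
    nlinarith [norm_nonneg x, norm_nonneg (x + intVec m)]
  rw [mul_assoc, mul_left_comm, ← div_eq_inv_mul, le_div_iff₀ (by positivity)]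
  calc ‖iteratedFDeriv ℝ i g (x + intVec m)‖ * (1 + ‖intVec m‖) ^ N
      ≤ ‖iteratedFDeriv ℝ i g (x + intVec m)‖ * ((1 + ‖x + intVec m‖) * (1 + ‖x‖)) ^ N := by
        gcongr
    _ = (1 + ‖x + intVec m‖) ^ N * ‖iteratedFDeriv ℝ i g (x + intVec m)‖ * (1 + ‖x‖) ^ N := by
        rw [mul_pow]; ring
    _ ≤ M * (1 + ‖x‖) ^ N := by gcongr

/-- The seminorms of `f · g(· + m)` decay faster than any power of `m`. -/
theorem seminorm_translate_le {n : ℕ} (f g : 𝓢(Fin n → ℝ, ℂ)) (k l N : ℕ) :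
    ∃ C : ℝ, ∀ m : Fin n → ℤ,
      SchwartzMap.seminorm ℂ k l (smulLeftCLM ℂ (g.compSubConstCLM ℂ (-intVec m)) f)
        ≤ C * ((1 + ‖intVec m‖) ^ N)⁻¹ := by
  obtain ⟨C, hC, h⟩ := seminorm_smulLeft_le f k l N
  obtain ⟨M, hM, hb⟩ := translate_bound g l N
  refine ⟨C * M, fun m => ?_⟩
  rw [mul_assoc]
  refine h _ (SchwartzMap.hasTemperateGrowth _) _ (by positivity) fun i hi x => ?_
  have e : ⇑(g.compSubConstCLM ℂ (-intVec m)) = fun x => g (x + intVec m) := by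
    ext x; simp
  rw [e, iteratedFDeriv_comp_add_right]
  exact hb m i hi x

theorem summable_seminorm_translate {n : ℕ} (f g : 𝓢(Fin n → ℝ, ℂ)) (k l : ℕ) :
    Summable fun m : Fin n → ℤ =>
      SchwartzMap.seminorm ℂ k l (smulLeftCLM ℂ (g.compSubConstCLM ℂ (-intVec m)) f) := by
  obtain ⟨C, h⟩ := seminorm_translate_le f g k l (n + 1)
  exact .of_nonneg_of_le (fun _ => apply_nonneg _ _) h
    ((summable_intVec n (n + 1) n.lt_succ_self).mul_left C)

/-! ### Periodization and Poisson summation -/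

theorem summable_translate {n : ℕ} (f : 𝓢(Fin n → ℝ, ℂ)) (x : Fin n → ℝ) :
    Summable fun m : Fin n → ℤ => f (x + intVec m) := by
  obtain ⟨M, hM, hb⟩ := translate_bound f 0 (n + 1)
  refine .of_norm_bounded (((summable_intVec n (n + 1) n.lt_succ_self).mul_left M).mul_right
    ((1 + ‖x‖) ^ (n + 1))) fun m => ?_
  simpa using hb m 0 le_rfl x

theorem continuous_periodization {n : ℕ} (f : 𝓢(Fin n → ℝ, ℂ)) :
    Continuous fun x => ∑' m : Fin n → ℤ, f (x + intVec m) := by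
  obtain ⟨M, hM, hb⟩ := translate_bound f 0 (n + 1)
  refine continuous_iff_continuousAt.2 fun x₀ => ?_
  have : ContinuousOn (fun x => ∑' m : Fin n → ℤ, f (x + intVec m))
      (Metric.ball 0 (‖x₀‖ + 1)) := by
    refine continuousOn_tsum (fun m => by fun_prop)
      (((summable_intVec n (n + 1) n.lt_succ_self).mul_left M).mul_right
        ((1 + (‖x₀‖ + 1)) ^ (n + 1))) fun m x hx => ?_
    have hx' : ‖x‖ ≤ ‖x₀‖ + 1 := (mem_ball_zero_iff.1 hx).le
    have h1 := hb m 0 le_rfl x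
    rw [norm_iteratedFDeriv_zero] at h1
    refine h1.trans ?_
    gcongr
  exact this.continuousAt (Metric.isOpen_ball.mem_nhds (by simp))

theorem expo_norm {n : ℕ} (m : Fin n → ℤ) (x : Fin n → ℝ) : ‖expo m x‖ = 1 := by
  have : (2 * π * Complex.I * ∑ i, (m i : ℂ) * (x i : ℂ))
      = ((2 * π * ∑ i, (m i : ℝ) * x i : ℝ) : ℂ) * Complex.I := by
    push_cast; ring
  rw [expo, this, Complex.norm_exp_ofReal_mul_I]

theorem expo_add_intVec {n : ℕ} (m l : Fin n → ℤ) (x : Fin n → ℝ) :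
    expo m (x + intVec l) = expo m x := by
  have : (2 * π * Complex.I * ∑ i, (m i : ℂ) * ((x + intVec l) i : ℂ))
      = 2 * π * Complex.I * ∑ i, (m i : ℂ) * (x i : ℂ)
        + ((∑ i, m i * l i : ℤ) : ℂ) * (2 * π * Complex.I) := by
    simp only [Pi.add_apply, intVec]
    push_cast
    simp only [mul_add, Finset.sum_add_distrib]
    ring
  rw [expo, expo, this, Complex.exp_add, Complex.exp_int_mul_two_pi_mul_I, mul_one]

theorem fhat_eq_integral_expo {n : ℕ} (f : (Fin n → ℝ) → ℂ) (m : Fin n → ℤ) :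
    fhat f (intVec m) = ∫ x, expo (-m) x * f x := by
  refine integral_congr_ae (.of_forall fun x => ?_)
  simp only [expo, dot, intVec, mul_comm (f x)]
  congr 2
  push_cast
  rw [Finset.mul_sum, Finset.mul_sum]
  exact Finset.sum_congr rfl fun i _ => by simp; ring

/-- The unit cube with lower corner `m`, open on the lower faces and closed on the upper ones, to
match the fundamental domain used for `UnitAddTorus`. -/
def cube {n : ℕ} (m : Fin n → ℤ) : Set (Fin n → ℝ) :=
  {x | ∀ i, x i ∈ Set.Ioc (m i : ℝ) (m i + 1)}

theorem measurableSet_cube {n : ℕ} (m : Fin n → ℤ) : MeasurableSet (cube m) := by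
  have : cube m = Set.univ.pi fun i => Set.Ioc (m i : ℝ) (m i + 1) := by
    ext; simp [cube]
  rw [this]
  exact MeasurableSet.univ_pi fun i => measurableSet_Ioc

theorem mem_cube_iff {n : ℕ} (m : Fin n → ℤ) (x : Fin n → ℝ) :
    x ∈ cube m ↔ m = fun i => ⌈x i⌉ - 1 := by
  simp only [cube, Set.mem_ofPred_eq, funext_iff, Set.mem_Ioc]
  refine forall_congr' fun i => ?_
  rw [eq_sub_iff_add_eq, eq_comm, Int.ceil_eq_iff]
  push_cast
  simp

/-- The integral over `ℝ^n` cut into integer translates of the unit cube. -/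
theorem hasSum_integral_cube {n : ℕ} {E : Type*} [NormedAddCommGroup E] [NormedSpace ℝ E]
    (h : (Fin n → ℝ) → E) (hh : Integrable h) :
    HasSum (fun m : Fin n → ℤ => ∫ x in cube 0, h (x + intVec m)) (∫ x, h x) := by
  have hU : ⋃ m : Fin n → ℤ, cube m = Set.univ :=
    Set.eq_univ_of_forall fun x => Set.mem_iUnion.2 ⟨_, (mem_cube_iff _ x).2 rfl⟩
  have hd : Pairwise (Function.onFun Disjoint (cube (n := n))) := fun a b hab =>
    Set.disjoint_left.2 fun x ha hb =>
      hab (((mem_cube_iff a x).1 ha).trans ((mem_cube_iff b x).1 hb).symm)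
  have := hasSum_integral_iUnion (f := h) (μ := volume) measurableSet_cube hd hh.integrableOn
  rw [hU, setIntegral_univ] at this
  convert this using 2 with m
  have hp : (fun x => x + intVec m) ⁻¹' cube m = cube 0 := by
    ext x; simp [cube, intVec, add_comm (_ : ℝ) 1]
  rw [← hp]
  exact (measurePreserving_add_right volume (intVec m)).setIntegral_preimage_emb
    (measurableEmbedding_addRight _) h (cube m)

/-- Unfolding: the Fourier coefficients of the periodization of `f` are the values of the
Fourier transform of `f` at integer points. -/
theorem integral_cube_periodization {n : ℕ} (f : 𝓢(Fin n → ℝ, ℂ)) (m : Fin n → ℤ) :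
    ∫ x in cube 0, expo (-m) x * ∑' l : Fin n → ℤ, f (x + intVec l) = fhat f (intVec m) := by
  have hint : Integrable fun x => expo (-m) x * f x :=
    (f.integrable (μ := volume)).bdd_mul (c := 1)
      (expo_bound _).1.continuous.aestronglyMeasurable (.of_forall fun x => (expo_norm _ x).le)
  have hn := (hasSum_integral_cube _ hint.norm).summable
  rw [fhat_eq_integral_expo]
  refine HasSum.unique ?_ (hasSum_integral_cube _ hint)
  have := hasSum_integral_of_summable_integral_norm
    (μ := volume.restrict (cube (0 : Fin n → ℤ)))
    (F := fun (l : Fin n → ℤ) x => expo (-m) (x + intVec l) * f (x + intVec l))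
    (fun l => (hint.comp_add_right (intVec l)).integrableOn) hn
  simp only [expo_add_intVec] at this ⊢
  simpa only [tsum_mul_left] using this

theorem mFourier_coe {n : ℕ} (m : Fin n → ℤ) (x : Fin n → ℝ) :
    UnitAddTorus.mFourier m (fun i => (x i : UnitAddCircle)) = expo m x := by
  simp only [UnitAddTorus.mFourier, ContinuousMap.coe_mk, fourier_coe_apply, expo,
    ← Complex.exp_sum, Finset.mul_sum]
  congr 1
  exact Finset.sum_congr rfl fun i _ => by push_cast; ring

/-- Rapid decay of the Fourier transform at integer points. -/
theorem fhat_decay {n : ℕ} (f : 𝓢(Fin n → ℝ, ℂ)) (N : ℕ) :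
    ∃ C : ℝ, ∀ m : Fin n → ℤ, ‖fhat f (intVec m)‖ ≤ C * ((1 + ‖intVec m‖) ^ N)⁻¹ := by
  -- Mathlib's Fourier transform on Schwartz space needs an inner product space, hence the detour
  -- through `EuclideanSpace`.
  let f₂ : 𝓢(EuclideanSpace ℝ (Fin n), ℂ) :=
    compCLMOfContinuousLinearEquiv ℂ (EuclideanSpace.equiv (Fin n) ℝ) f
  have hF : ∀ η : Fin n → ℝ, fhat f η = (FourierTransform.fourier f₂) (WithLp.toLp 2 η) := by
    intro η
    rw [fourier_coe, Real.fourier_eq', fhat,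
      ← (PiLp.volume_preserving_ofLp (Fin n)).integral_comp
        (MeasurableEquiv.toLp 2 (Fin n → ℝ)).symm.measurableEmbedding]
    refine integral_congr_ae (.of_forall fun x => ?_)
    simp [f₂, dot, PiLp.inner_apply, mul_comm]
    rw [show EuclideanSpace.equiv (Fin n) ℝ x = x.ofLp from rfl]
    congr 2
    ring
  refine ⟨2 ^ N * ((Finset.Iic ((N, 0) : ℕ × ℕ)).sup
    fun m => SchwartzMap.seminorm ℂ m.1 m.2) (FourierTransform.fourier f₂), fun m => ?_⟩
  have h1 := one_add_le_sup_seminorm_apply (𝕜 := ℂ) (m := (N, 0)) le_rfl le_rfl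
    (FourierTransform.fourier f₂) (WithLp.toLp 2 (intVec m))
  rw [norm_iteratedFDeriv_zero, ← hF] at h1
  have h2 : ‖intVec m‖ ≤ ‖WithLp.toLp 2 (intVec m)‖ :=
    (pi_norm_le_iff_of_nonneg (norm_nonneg _)).2 fun i =>
      PiLp.norm_apply_le (WithLp.toLp 2 (intVec m)) i
  rw [← div_eq_mul_inv, le_div_iff₀ (by positivity), mul_comm]
  refine le_trans ?_ h1
  gcongr

/-- The Poisson summation formula, with Fourier coefficients `fhat f (intVec m)`. -/
theorem hasSum_poisson {n : ℕ} (f : 𝓢(Fin n → ℝ, ℂ)) (x : Fin n → ℝ) :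
    HasSum (fun m : Fin n → ℤ => fhat f (intVec m) * expo m x)
      (∑' m : Fin n → ℤ, f (x + intVec m)) := by
  set G : (Fin n → ℝ) → ℂ := fun x => ∑' m : Fin n → ℤ, f (x + intVec m) with hG
  have hGc : Continuous G := continuous_periodization f
  have hGp : ∀ (x : Fin n → ℝ) (l : Fin n → ℤ), G (x + intVec l) = G x := by
    intro x l
    rw [hG]
    refine Eq.trans (tsum_congr fun m => ?_)
      ((Equiv.addLeft l).tsum_eq fun m => f (x + intVec m))
    congr 1
    ext i
    simp [intVec, add_assoc]
  -- `G` descends to a continuous function `F` on the torus.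
  let π₀ : (Fin n → ℝ) → UnitAddTorus (Fin n) := fun x i => (x i : UnitAddCircle)
  have hq : IsOpenQuotientMap π₀ := by
    have := IsOpenQuotientMap.piMap (f := fun (_ : Fin n) (t : ℝ) => (t : UnitAddCircle))
      fun _ => QuotientAddGroup.isOpenQuotientMap_mk
    exact this
  have hlift : ∀ a b, π₀ a = π₀ b → G a = G b := by
    intro a b hab
    have h1 : ∀ i, ∃ l : ℤ, b i = a i + l := fun i => by
      have h0 : ((b i - a i : ℝ) : UnitAddCircle) = 0 := by
        rw [AddCircle.coe_sub, sub_eq_zero]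
        exact (congrFun hab i).symm
      obtain ⟨l, hl⟩ := (AddCircle.coe_eq_zero_iff 1).1 h0
      exact ⟨l, by simp at hl; linarith⟩
    choose l hl using h1
    rw [← hGp a l]
    congr 1
    ext i; simp [hl, intVec]
  let F : C(UnitAddTorus (Fin n), ℂ) :=
    ⟨fun y => G (Function.surjInv hq.surjective y), by
      rw [hq.isQuotientMap.continuous_iff]
      refine hGc.congr fun x => hlift _ _ ?_
      exact (Function.surjInv_eq hq.surjective _).symm⟩
  have hF : ∀ x, F (π₀ x) = G x := fun x =>
    hlift _ _ (Function.surjInv_eq hq.surjective _)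
  have hcoef : ∀ m, UnitAddTorus.mFourierCoeff F m = fhat f (intVec m) := by
    intro m
    rw [UnitAddTorus.mFourierCoeff_eq_integral F m 0, ← integral_cube_periodization]
    have hs : {x : Fin n → ℝ | ∀ i, x i ∈ Set.Ioc ((0 : Fin n → ℝ) i) ((0 : Fin n → ℝ) i + 1)}
        = cube 0 := by
      ext; simp [cube]
    rw [hs]
    refine integral_congr_ae (.of_forall fun x => ?_)
    simp only [smul_eq_mul, mFourier_coe]
    exact congrArg _ (hF x)
  have hsum : Summable (UnitAddTorus.mFourierCoeff F) := by
    obtain ⟨C, hC⟩ := fhat_decay f (n + 1)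
    refine .of_norm_bounded ((summable_intVec n (n + 1) n.lt_succ_self).mul_left C) fun m => ?_
    rw [hcoef]; exact hC m
  have := UnitAddTorus.hasSum_mFourier_series_apply_of_summable hsum (π₀ x)
  simpa only [hcoef, hF, smul_eq_mul, π₀, mFourier_coe] using this

/-! ### A smooth partition of unity by integer translates -/

/-- A smooth function of one variable supported in `[-1, 1]` whose integer translates sum to
`1`. -/
def bump₁ (t : ℝ) : ℝ := Real.smoothTransition (t + 1) - Real.smoothTransition t

theorem bump₁_eq_zero {t : ℝ} (ht : t ∉ Set.Icc (-1 : ℝ) 1) : bump₁ t = 0 := by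
  rw [Set.mem_Icc, not_and_or, not_le, not_le] at ht
  rcases ht with h | h
  · rw [bump₁, Real.smoothTransition.zero_of_nonpos (by linarith),
      Real.smoothTransition.zero_of_nonpos (by linarith), sub_zero]
  · rw [bump₁, Real.smoothTransition.one_of_one_le (by linarith),
      Real.smoothTransition.one_of_one_le (by linarith), sub_self]

/-- These two translates are the only ones that can be nonzero at `t`. Their sum telescopes to
`smoothTransition (s + 1) - smoothTransition (s - 1) = 1 - 0`, where `0 ≤ s < 1` is the fractional
part of `t`. -/
theorem bump₁_sum (t : ℝ) : ∑ l ∈ ({-⌊t⌋ - 1, -⌊t⌋} : Finset ℤ), bump₁ (t + l) = 1 := by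
  have h1 := Int.floor_le t
  have h2 := Int.lt_floor_add_one t
  rw [Finset.sum_pair (by lia), bump₁, bump₁]
  push_cast
  rw [show t + (-(⌊t⌋ : ℝ) - 1) + 1 = t + -⌊t⌋ by ring,
    Real.smoothTransition.one_of_one_le (x := t + -⌊t⌋ + 1) (by linarith),
    Real.smoothTransition.zero_of_nonpos (x := t + (-⌊t⌋ - 1)) (by linarith)]
  ring

theorem bump₁_translate_eq_zero {t : ℝ} {l : ℤ} (hl : l ∉ ({-⌊t⌋ - 1, -⌊t⌋} : Finset ℤ)) :
    bump₁ (t + l) = 0 := by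
  have h1 := Int.floor_le t
  have h2 := Int.lt_floor_add_one t
  simp only [Finset.mem_insert, Finset.mem_singleton, not_or] at hl
  rcases lt_or_ge (l : ℤ) (-⌊t⌋ - 1) with h | h
  · have : (l : ℝ) ≤ -⌊t⌋ - 2 := by exact_mod_cast (by lia : l ≤ -⌊t⌋ - 2)
    refine bump₁_eq_zero fun hm => ?_
    linarith [hm.1]
  · have : (-⌊t⌋ + 1 : ℝ) ≤ l := by exact_mod_cast (by lia : -⌊t⌋ + 1 ≤ l)
    rw [bump₁, Real.smoothTransition.one_of_one_le (by linarith),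
      Real.smoothTransition.one_of_one_le (by linarith), sub_self]

theorem exists_partition (n : ℕ) :
    ∃ χ : 𝓢(Fin n → ℝ, ℂ), ∀ x, HasSum (fun m : Fin n → ℤ => χ (x + intVec m)) 1 := by
  let c : (Fin n → ℝ) → ℂ := fun x => ((∏ i, bump₁ (x i) : ℝ) : ℂ)
  have hsm : ContDiff ℝ ((⊤ : ℕ∞) : WithTop ℕ∞) c := by
    have h1 : ContDiff ℝ ((⊤ : ℕ∞) : WithTop ℕ∞) bump₁ :=
      (Real.smoothTransition.contDiff.comp (contDiff_id.add contDiff_const)).sub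
        Real.smoothTransition.contDiff
    have h2 : ContDiff ℝ ((⊤ : ℕ∞) : WithTop ℕ∞) fun x : Fin n → ℝ => ∏ i, bump₁ (x i) :=
      contDiff_prod fun i _ => h1.comp (contDiff_apply ℝ ℝ i)
    exact Complex.ofRealCLM.contDiff.comp h2
  have hc : HasCompactSupport c := by
    refine HasCompactSupport.intro
      (isCompact_univ_pi fun _ : Fin n => isCompact_Icc (a := (-1 : ℝ)) (b := 1)) fun x hx => ?_
    simp only [Set.mem_pi, Set.mem_univ, true_imp_iff, not_forall] at hx
    obtain ⟨i, hi⟩ := hx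
    simp only [c]
    rw [Finset.prod_eq_zero (Finset.mem_univ i) (bump₁_eq_zero hi), Complex.ofReal_zero]
  refine ⟨hc.toSchwartzMap hsm, fun x => ?_⟩
  have key : ∑ m ∈ Fintype.piFinset fun i => ({-⌊x i⌋ - 1, -⌊x i⌋} : Finset ℤ),
      c (x + intVec m) = 1 := by
    simp only [c, ← Complex.ofReal_sum]
    simp only [Pi.add_apply, intVec]
    rw [← Finset.prod_univ_sum (fun i => ({-⌊x i⌋ - 1, -⌊x i⌋} : Finset ℤ))
      (fun i l => bump₁ (x i + l))]
    rw [Finset.prod_eq_one fun i _ => bump₁_sum (x i), Complex.ofReal_one]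
  rw [← key]
  refine hasSum_sum_of_ne_finset_zero fun m hm => ?_
  simp only [Fintype.mem_piFinset, not_forall] at hm
  obtain ⟨i, hi⟩ := hm
  change c (x + intVec m) = 0
  simp only [c]
  rw [Finset.prod_eq_zero (Finset.mem_univ i), Complex.ofReal_zero]
  exact bump₁_translate_eq_zero hi

/-! ### Expansion of an invariant distribution -/

/-- A `ℤ^n`-periodic tempered distribution is the series `∑ₘ f̂(m) cₘ`, where
`cₘ = T (e^{2πi m·x} χ)`. -/
theorem hasSum_fhat_mul_coeff {n : ℕ} (T : 𝓢(Fin n → ℝ, ℂ) →L[ℂ] ℂ)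
    (hper : ∀ (f g : SchwartzMap (Fin n → ℝ) ℂ) (m : Fin n → ℤ),
      (∀ x, g x = f (x + fun i => (m i : ℝ))) → T g = T f)
    (χ : 𝓢(Fin n → ℝ, ℂ)) (hχ : ∀ x, HasSum (fun m : Fin n → ℤ => χ (x + intVec m)) 1)
    (f : 𝓢(Fin n → ℝ, ℂ)) :
    HasSum (fun m : Fin n → ℤ => fhat f (intVec m) * T (smulLeftCLM ℂ (expo m) χ)) (T f) := by
  -- `a` sums the pieces `f · χ(· + m)` and is `f`; `b` sums the pieces `χ · f(· + m)`
  obtain ⟨a, ha, ha'⟩ := exists_hasSum_schwartz _ (summable_seminorm_translate f χ)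
  obtain ⟨b, hb, hb'⟩ := exists_hasSum_schwartz _ (summable_seminorm_translate χ f)
  have h1 : ∀ (u v : 𝓢(Fin n → ℝ, ℂ)) (m : Fin n → ℤ) x,
      smulLeftCLM ℂ (u.compSubConstCLM ℂ (-intVec m)) v x = u (x + intVec m) * v x := by
    intro u v m x
    rw [smulLeftCLM_apply_apply (SchwartzMap.hasTemperateGrowth _)]
    simp
  have haf : a = f := by
    ext x
    refine (ha' x).unique ?_
    simpa [h1] using (hχ x).mul_right (f x)
  -- Translating the `-m`-th piece of `a` by `m` gives the `m`-th piece of `b`, so periodicity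
  -- matches the two sums term by term after `m ↦ -m`.
  have hTab : T a = T b := by
    refine (ha.mapL T).unique ?_
    rw [← (Equiv.neg (Fin n → ℤ)).hasSum_iff]
    convert hb.mapL T using 2 with m
    refine (hper _ _ m fun x => ?_).symm
    have : (fun i => (m i : ℝ)) = intVec m := rfl
    rw [this, Equiv.neg_apply, h1, h1]
    have : x + intVec m + intVec (-m) = x := by ext i; simp [intVec]
    rw [this, mul_comm]
  have hs : ∀ k l, Summable fun m : Fin n → ℤ =>
      SchwartzMap.seminorm ℂ k l (fhat f (intVec m) • smulLeftCLM ℂ (expo m) χ) := by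
    intro k l
    obtain ⟨C, hC⟩ := seminorm_expo_le χ k l
    obtain ⟨D, hD⟩ := fhat_decay f (n + 1 + l)
    refine .of_nonneg_of_le (fun _ => apply_nonneg _ _) (fun m => ?_)
      ((summable_intVec n (n + 1) n.lt_succ_self).mul_left (D * C))
    rw [map_smul_eq_mul]
    calc _ ≤ (D * ((1 + ‖intVec m‖) ^ (n + 1 + l))⁻¹) * (C * (1 + ‖intVec m‖) ^ l) :=
          mul_le_mul (hD m) (hC m) (apply_nonneg _ _) ((norm_nonneg _).trans (hD m))
      _ = _ := by
          have : (1 + ‖intVec m‖) ≠ 0 := by positivity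
          rw [pow_add]
          field_simp
  -- Poisson summation identifies `b` with the sum of the pieces `f̂(m) e^{2πi m·x} χ`.
  obtain ⟨d, hd, hd'⟩ := exists_hasSum_schwartz _ hs
  have hdb : d = b := by
    ext x
    have e1 := (hasSum_poisson f x).mul_right (χ x)
    have e2 : HasSum (fun m : Fin n → ℤ => f (x + intVec m) * χ x) (b x) := by
      simpa only [h1] using hb' x
    rw [← e2.tsum_eq, tsum_mul_right]
    refine (hd' x).unique ?_
    simpa [smulLeftCLM_apply_apply (expo_temperate _), mul_assoc] using e1
  have hTf : T f = T d := by rw [hdb, ← hTab, haf]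
  rw [hTf]
  simpa using hd.mapL T

/-- The `m`-th coefficient depends only on `m` modulo `2k`. -/
theorem coeff_periodic {n : ℕ} (k : ℕ) (T : 𝓢(Fin n → ℝ, ℂ) →L[ℂ] ℂ)
    (hmod : ∀ (f g : SchwartzMap (Fin n → ℝ) ℂ) (m : Fin n → ℤ),
      (∀ x, g x = Complex.exp (4 * π * (k : ℝ) * Complex.I * ∑ i, (m i : ℝ) * x i) * f x) →
        T g = T f)
    (χ : 𝓢(Fin n → ℝ, ℂ)) (m r : Fin n → ℤ) :
    T (smulLeftCLM ℂ (expo fun i => 2 * (k : ℤ) * m i + r i) χ)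
      = T (smulLeftCLM ℂ (expo r) χ) := by
  refine hmod _ _ m fun x => ?_
  rw [smulLeftCLM_apply_apply (expo_temperate _), smulLeftCLM_apply_apply (expo_temperate _),
    smul_eq_mul, smul_eq_mul, ← mul_assoc]
  congr 1
  rw [expo, expo, ← Complex.exp_add]
  congr 1
  push_cast
  simp only [Finset.mul_sum, ← Finset.sum_add_distrib]
  exact Finset.sum_congr rfl fun i _ => by ring

/-- Grouping a series over `ℤ^n` with `2k`-periodic coefficients `c` by residue classes. -/
theorem hasSum_residues {n : ℕ} (k : ℕ) (hk : 0 < k) (g : (Fin n → ℤ) → ℂ) (c : (Fin n → ℤ) → ℂ)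
    (hg : Summable g)
    (hc : ∀ m r : Fin n → ℤ, c (fun i => 2 * (k : ℤ) * m i + r i) = c r)
    (s : ℂ) (h : HasSum (fun m => g m * c m) s) :
    s = ∑ j : Fin n → Fin (2 * k), c (fun i => (j i : ℤ)) *
      ∑' m : Fin n → ℤ, g (fun i => 2 * (k : ℤ) * m i + (j i : ℤ)) := by
  have : NeZero (2 * k) := ⟨by lia⟩
  let e : (Fin n → ℤ) ≃ (Fin n → Fin (2 * k)) × (Fin n → ℤ) :=
    (Equiv.arrowCongr (Equiv.refl _) ((Int.divModEquiv (2 * k)).trans (Equiv.prodComm _ _))).trans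
      (Equiv.arrowProdEquivProdArrow (Fin n) (fun _ => Fin (2 * k)) (fun _ => ℤ))
  have he : ∀ j m, e.symm (j, m) = fun i => 2 * (k : ℤ) * m i + (j i : ℤ) := by
    intro j m
    ext i
    simp [e, Int.divModEquiv, Equiv.arrowCongr, Equiv.arrowProdEquivProdArrow]
    ring
  rw [← e.symm.hasSum_iff] at h
  rw [← e.symm.summable_iff] at hg
  have h2 : HasSum (fun j : Fin n → Fin (2 * k) => c (fun i => (j i : ℤ)) *
      ∑' m : Fin n → ℤ, g (fun i => 2 * (k : ℤ) * m i + (j i : ℤ))) s := by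
    refine h.prod_fiberwise fun j => ?_
    have h3 := (hg.prod_factor j).hasSum.mul_left (c (fun i => (j i : ℤ)))
    simpa only [Function.comp, he, hc, mul_comm (c fun i => (j i : ℤ))] using h3
  exact h2.unique (hasSum_fintype _)

/-! ### Linear independence and conclusion -/

/-- Orthogonality of the characters on the unit cube. -/
theorem integral_cube_expo {n : ℕ} (m r : Fin n → ℤ) :
    ∫ x in cube 0, expo (-m) x * expo r x = if m = r then 1 else 0 := by
  have h1 := UnitAddTorus.mFourierCoeff_eq_integral (UnitAddTorus.mFourier r) m 0
  have hs : {x : Fin n → ℝ | ∀ i, x i ∈ Set.Ioc ((0 : Fin n → ℝ) i) ((0 : Fin n → ℝ) i + 1)}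
      = cube 0 := by
    ext; simp [cube]
  simp only [hs, mFourier_coe, smul_eq_mul, UnitAddTorus.mFourierCoeff] at h1
  rw [← h1, ← orthonormal_iff_ite.1 UnitAddTorus.orthonormal_mFourier m r]
  simp only [UnitAddTorus.mFourierLp, ContinuousMap.inner_toLp, ← UnitAddTorus.mFourier_neg]
  exact integral_congr_ae (.of_forall fun x => mul_comm _ _)

/-- The periodization of `e^{2πi r·x} χ` is the character `e^{2πi r·x}`, so its Fourier transform
at integer points is a delta function. -/
theorem fhat_test {n : ℕ} (χ : 𝓢(Fin n → ℝ, ℂ))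
    (hχ : ∀ x, HasSum (fun m : Fin n → ℤ => χ (x + intVec m)) 1) (m r : Fin n → ℤ) :
    fhat (smulLeftCLM ℂ (expo r) χ) (intVec m) = if m = r then 1 else 0 := by
  rw [← integral_cube_periodization, ← integral_cube_expo]
  refine integral_congr_ae (.of_forall fun x => ?_)
  simp only [smulLeftCLM_apply_apply (expo_temperate r), expo_add_intVec, smul_eq_mul,
    tsum_mul_left, (hχ x).tsum_eq, mul_one]

theorem linearIndependent_nuFun {n : ℕ} (k : ℕ) :
    LinearIndependent ℂ (nuFun (n := n) k) := by
  obtain ⟨χ, hχ⟩ := exists_partition n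
  have key : ∀ j r : Fin n → Fin (2 * k),
      nuFun k j (smulLeftCLM ℂ (expo fun i => (r i : ℤ)) χ) = if j = r then 1 else 0 := by
    intro j r
    have h : ∀ m : Fin n → ℤ, (fun i => 2 * (k : ℤ) * m i + (j i : ℤ)) = (fun i => (r i : ℤ)) ↔
        m = 0 ∧ j = r := by
      intro m
      simp only [funext_iff, ← forall_and]
      refine forall_congr' fun i => ⟨fun hi => ?_, fun hi => ?_⟩
      · have h1 : ((j i : ℕ) : ℤ) < 2 * k := by exact_mod_cast (j i).2
        have h2 : ((r i : ℕ) : ℤ) < 2 * k := by exact_mod_cast (r i).2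
        have h3 : m i = 0 := by
          by_contra h0
          rcases lt_or_gt_of_ne h0 with h0 | h0 <;> nlinarith
        refine ⟨h3, Fin.ext ?_⟩
        rw [h3] at hi
        simpa using hi
      · rw [hi.1, hi.2]; simp
    have h' : nuFun k j (smulLeftCLM ℂ (expo fun i => (r i : ℤ)) χ)
        = ∑' m : Fin n → ℤ, if m = 0 ∧ j = r then (1 : ℂ) else 0 := by
      refine tsum_congr fun m => ?_
      simp only [← h m]
      exact fhat_test χ hχ _ _
    rw [h']
    by_cases hjr : j = r <;> simp [hjr]
  rw [Fintype.linearIndependent_iff]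
  intro g hg r
  have := congrFun hg (smulLeftCLM ℂ (expo fun i => (r i : ℤ)) χ)
  simpa [key] using this

end

/-- A tempered distribution `ν` on `ℝ^n` which is `ℤ^n`-periodic and invariant under
the modulations `f ↦ e^{4πik m·x} f`, `m ∈ ℤ^n`, is a linear combination of the
distributions `ν_j`, `j ∈ A_k = {0,…,2k-1}^n`; consequently the space of such
distributions has dimension `(2k)^n`. -/
theorem invariant_distributions {n : ℕ} (k : ℕ) (hk : 0 < k)
    (T : SchwartzMap (Fin n → ℝ) ℂ →L[ℂ] ℂ)
    (hper : ∀ (f g : SchwartzMap (Fin n → ℝ) ℂ) (m : Fin n → ℤ),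
      (∀ x, g x = f (x + fun i => (m i : ℝ))) → T g = T f)
    (hmod : ∀ (f g : SchwartzMap (Fin n → ℝ) ℂ) (m : Fin n → ℤ),
      (∀ x, g x = Complex.exp (4 * π * (k : ℝ) * Complex.I * ∑ i, (m i : ℝ) * x i) * f x) →
        T g = T f) :
    (∃ c : (Fin n → Fin (2 * k)) → ℂ,
      ∀ f : SchwartzMap (Fin n → ℝ) ℂ,
        T f = ∑ j : Fin n → Fin (2 * k), c j * nuFun k j f) ∧
    Module.finrank ℂ
        (Submodule.span ℂ (Set.range (nuFun (n := n) k))) = (2 * k) ^ n := by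
  constructor
  · obtain ⟨χ, hχ⟩ := exists_partition n
    refine ⟨fun j => T (SchwartzMap.smulLeftCLM ℂ (expo fun i => (j i : ℤ)) χ), fun f => ?_⟩
    obtain ⟨C, hC⟩ := fhat_decay f (n + 1)
    exact hasSum_residues k hk (fun m => fhat f (intVec m))
      (fun m => T (SchwartzMap.smulLeftCLM ℂ (expo m) χ))
      (.of_norm_bounded ((summable_intVec n (n + 1) n.lt_succ_self).mul_left C) hC)
      (coeff_periodic k T hmod χ) _ (hasSum_fhat_mul_coeff T hper χ hχ f)
  · rw [finrank_span_eq_card (linearIndependent_nuFun k)]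
    simp
end
end

section
/- Mehler's formula: for λ > 0, t > 0 and x, u ∈ ℝ^n, the Hermite semigroup kernel satisfies Σ_{α∈ℕ^n} e^{-(2|α|+n)λt} Φ_α^λ(x) Φ_α^λ(u) = (2π)^{-n/2} (sinh(2λt))^{-n/2} λ^{n/2} exp(-(λ/4) tanh(λt)|x+u|² - (λ/4) coth(λt)|x-u|²), where Φ_α^λ(x) = λ^{n/4} Φ_α(√λ x) and Φ_α are the L²-normalized Hermite functions on ℝ^n. -/
/-!
Since `2|α| + n = ∑ i, (2 α_i + 1)`, each term of the series is a product over the coordinates, and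
a sum over `Fin n → ℕ` of such products is the product of the one-dimensional sums
(`summable_and_tsum_prod_pi`). So everything reduces to Mehler's formula in dimension one.

There, `e^{-t²}` is up to a constant the Fourier transform of `e^{-π² s²}`, so `m` differentiations
under the integral write `H_m(x)` as a multiple of
`e^{x²} ∫ e^{-2πisx} (-2πis)^m e^{-π² s²} ds` (`iteratedDeriv_gaussian`). Multiplying the formulas
for `H_m(x)` and `H_m(y)` gives a double integral in `(s, s')` whose dependence on `m` is only
`(-4π² s s')^m`, so the sum against `(r/2)^m / m!` is the exponential series of `-2π² r s s'`.
For `0 ≤ r < 1` the interchange of sum and integral (`hasSum_fourierIntegrand`) is justified by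
`2 r |s s'| ≤ r (s² + s'²)`, which leaves the integrable bound `e^{-π² (1 - r) (s² + s'²)}`.
What remains is a Gaussian double integral, computed one variable at a time
(`integral_double_gaussian`). This yields
`∑ (r/2)^m / m! H_m(x) H_m(y) = (1 - r²)^{-1/2} exp (-(r² (x² + y²) - 2 r x y) / (1 - r²))`
(`hasSum_hermitePoly`), and `r = e^{-2λt}` turns it into the hyperbolic form.
-/

open scoped BigOperators Real
open MeasureTheory

noncomputable section

/-- The physicists' Hermite polynomial via the Rodrigues formula:
`H_m(x) = (-1)^m e^{x²} (d/dx)^m e^{-x²}`. -/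
def hermitePoly (m : ℕ) (x : ℝ) : ℝ :=
  (-1 : ℝ) ^ m * Real.exp (x ^ 2) * iteratedDeriv m (fun t => Real.exp (-t ^ 2)) x

/-- The `L²(ℝ)`-normalized Hermite function `Φ_m(x) = (2^m m! √π)^{-1/2} H_m(x) e^{-x²/2}`. -/
def hermiteFun (m : ℕ) (x : ℝ) : ℝ :=
  ((2 : ℝ) ^ m * (m.factorial : ℝ) * Real.sqrt π) ^ (-(1 : ℝ) / 2) *
    hermitePoly m x * Real.exp (-x ^ 2 / 2)

/-- The normalized Hermite functions on `ℝ^n`: `Φ_α(x) = ∏ Φ_{α_i}(x_i)`. -/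
def hermiteFunN {n : ℕ} (α : Fin n → ℕ) (x : Fin n → ℝ) : ℝ :=
  ∏ i, hermiteFun (α i) (x i)

/-- The scaled Hermite functions `Φ_α^λ(x) = λ^{n/4} Φ_α(√λ x)`. -/
def hermiteFunLam {n : ℕ} (lam : ℝ) (α : Fin n → ℕ) (x : Fin n → ℝ) : ℝ :=
  lam ^ ((n : ℝ) / 4) * hermiteFunN α fun i => Real.sqrt lam * x i

/-! ### Fourier representation of the Hermite polynomials -/

lemma iteratedDeriv_ofReal_comp {f : ℝ → ℝ} (hf : ContDiff ℝ ⊤ f) (m : ℕ) :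
    iteratedDeriv m (fun t => (f t : ℂ)) = fun t => ((iteratedDeriv m f t : ℝ) : ℂ) := by
  induction m with
  | zero => simp
  | succ k ih =>
    rw [iteratedDeriv_succ, ih]
    ext t
    have hd : DifferentiableAt ℝ (iteratedDeriv k f) t :=
      hf.differentiable_iteratedDeriv k (by exact_mod_cast WithTop.coe_lt_top _) t
    rw [iteratedDeriv_succ]
    exact hd.hasDerivAt.ofReal_comp.deriv

/-- The integrand, as a function of `s`, of the Fourier transform at `x` of
`(-2πis)^m e^{-π² s²}`, in Mathlib's normalization `e^{-2πisx}` of the character. -/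
def fourierIntegrand (m : ℕ) (x s : ℝ) : ℂ :=
  Complex.exp (-2 * π * s * x * Complex.I) *
    ((-2 * π * Complex.I * s) ^ m * Complex.exp (-π * π * s ^ 2))

/-- The Fourier representation of the derivatives of `e^{-t²}`, hence of the Hermite polynomials. -/
lemma iteratedDeriv_gaussian (m : ℕ) (x : ℝ) :
    ((iteratedDeriv m (fun t => Real.exp (-t ^ 2)) x : ℝ) : ℂ) =
      (√π : ℝ) * ∫ s, fourierIntegrand m x s := by
  have hpi : (0 : ℝ) < √π := Real.sqrt_pos.2 Real.pi_pos
  have hsq : (π : ℂ) ^ (1 / 2 : ℂ) = ((√π : ℝ) : ℂ) := by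
    rw [Real.sqrt_eq_rpow, Complex.ofReal_cpow Real.pi_pos.le]; norm_num
  have h1 : FourierTransform.fourier (fun s : ℝ => Complex.exp (-π * π * s ^ 2)) =
      fun t : ℝ => (1 / (√π : ℝ) : ℂ) * ((Real.exp (-t ^ 2) : ℝ) : ℂ) := by
    rw [fourier_gaussian_pi (b := (π : ℂ)) (by simpa using Real.pi_pos), hsq]
    ext t
    congr 1
    push_cast
    congr 1
    have : (π : ℂ) ≠ 0 := by exact_mod_cast Real.pi_ne_zero
    field_simp
  have hint : ∀ n : ℕ, (n : ℕ∞) ≤ ⊤ →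
      Integrable (fun s : ℝ => s ^ n • Complex.exp (-π * π * s ^ 2)) := by
    intro n _
    have h := integrable_rpow_mul_exp_neg_mul_sq (b := π * π) (by positivity)
      (s := n) (by linarith [(Nat.cast_nonneg n : (0 : ℝ) ≤ n)])
    refine (h.ofReal (𝕜 := ℂ)).congr (Filter.Eventually.of_forall fun s => ?_)
    simp
  have h2 := Real.iteratedDeriv_fourier (n := m) hint le_top
  rw [h1] at h2
  have h3 := congrFun h2 x
  have hc : ContDiff ℝ ⊤ (fun t : ℝ => Real.exp (-t ^ 2)) := by fun_prop
  have hcC : ContDiff ℝ ⊤ (fun t : ℝ => ((Real.exp (-t ^ 2) : ℝ) : ℂ)) :=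
    Complex.ofRealCLM.contDiff.comp hc
  rw [iteratedDeriv_const_mul _ (hcC.of_le le_top).contDiffAt,
    iteratedDeriv_ofReal_comp hc, Real.fourier_real_eq_integral_exp_smul] at h3
  have hne : ((√π : ℝ) : ℂ) ≠ 0 := by exact_mod_cast hpi.ne'
  have h4 : (∫ v : ℝ, Complex.exp (↑(-2 * π * v * x) * Complex.I) •
      (-2 * (π : ℂ) * Complex.I * v) ^ m • Complex.exp (-π * π * v ^ 2)) =
      ∫ s, fourierIntegrand m x s := by
    congr 1; ext s; simp [fourierIntegrand]
  rw [← h4, ← h3]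
  field_simp

/-! ### Mehler's formula for Hermite polynomials -/

/-- Summation under the double integral: the `m`-dependence of the product of the two Fourier
integrands, weighted by `(r/2)^m / m!`, is the exponential series of `-2π² r s s'`. -/
lemma hasSum_fourierIntegrand {r : ℝ} (h0 : 0 ≤ r) (h1 : r < 1) (x y : ℝ) :
    HasSum (fun m : ℕ => ((r / 2 : ℝ) : ℂ) ^ m / (m.factorial : ℂ) *
        ((∫ s, fourierIntegrand m x s) * ∫ s, fourierIntegrand m y s))
      (∫ p : ℝ × ℝ, Complex.exp (-2 * π * p.1 * x * Complex.I - 2 * π * p.2 * y * Complex.I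
        - 2 * π ^ 2 * r * p.1 * p.2 - π ^ 2 * (p.1 ^ 2 + p.2 ^ 2))) := by
  have hterm : ∀ m : ℕ, ((r / 2 : ℝ) : ℂ) ^ m / (m.factorial : ℂ) *
        ((∫ s, fourierIntegrand m x s) * ∫ s, fourierIntegrand m y s) =
      ∫ p : ℝ × ℝ, ((r / 2 : ℝ) : ℂ) ^ m / (m.factorial : ℂ) *
        (fourierIntegrand m x p.1 * fourierIntegrand m y p.2) := by
    intro m
    rw [integral_const_mul, Measure.volume_eq_prod, integral_prod_mul]
  simp_rw [hterm]
  have hcont : ∀ (m : ℕ) (z : ℝ), Continuous (fourierIntegrand m z) := by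
    intro m z; unfold fourierIntegrand; fun_prop
  have hsum : ∀ p : ℝ × ℝ, HasSum (fun m : ℕ => (2 * π ^ 2 * r * |p.1| * |p.2|) ^ m / m.factorial *
      Real.exp (-(π ^ 2 * (p.1 ^ 2 + p.2 ^ 2))))
      (Real.exp (2 * π ^ 2 * r * |p.1| * |p.2|) *
        Real.exp (-(π ^ 2 * (p.1 ^ 2 + p.2 ^ 2)))) := by
    intro p
    have h := NormedSpace.expSeries_div_hasSum_exp (2 * π ^ 2 * r * |p.1| * |p.2|)
    rw [← Real.exp_eq_exp_ℝ] at h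
    exact h.mul_right _
  refine hasSum_integral_of_dominated_convergence
    (fun m p => (2 * π ^ 2 * r * |p.1| * |p.2|) ^ m / m.factorial *
      Real.exp (-(π ^ 2 * (p.1 ^ 2 + p.2 ^ 2)))) ?_ ?_ ?_ ?_ ?_
  · intro m
    have := hcont m x
    have := hcont m y
    exact Continuous.aestronglyMeasurable (by fun_prop)
  · refine fun m => Filter.Eventually.of_forall fun p => le_of_eq ?_
    have hn : ∀ z s : ℝ, ‖fourierIntegrand m z s‖ =
        (2 * π * |s|) ^ m * Real.exp (-(π ^ 2 * s ^ 2)) := by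
      intro z s
      have e1 : (-2 * π * s * z * Complex.I : ℂ) = ((-2 * π * s * z : ℝ) : ℂ) * Complex.I := by
        push_cast; ring
      have e2 : (-π * π * s ^ 2 : ℂ) = ((-(π ^ 2 * s ^ 2) : ℝ) : ℂ) := by push_cast; ring
      rw [fourierIntegrand, e1, e2, norm_mul, Complex.norm_exp_ofReal_mul_I, norm_mul,
        Complex.norm_exp_ofReal, norm_pow]
      simp [abs_of_pos Real.pi_pos]
    rw [norm_mul, norm_mul, hn, hn, norm_div, norm_pow, Complex.norm_real,
      Complex.norm_natCast, Real.norm_of_nonneg (by positivity : 0 ≤ r / 2), mul_add, neg_add,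
      Real.exp_add,
      show 2 * π ^ 2 * r * |p.1| * |p.2| = (r / 2) * (2 * π * |p.1|) * (2 * π * |p.2|) by ring,
      mul_pow _ (2 * π * |p.2|) m, mul_pow (r / 2) (2 * π * |p.1|) m]
    ring
  · exact Filter.Eventually.of_forall fun p => (hsum p).summable
  · simp_rw [fun p => (hsum p).tsum_eq]
    have hg := integrable_exp_neg_mul_sq (b := π ^ 2 * (1 - r))
      (mul_pos (by positivity) (by linarith))
    refine (hg.mul_prod hg).mono' (Continuous.aestronglyMeasurable (by fun_prop))
      (Filter.Eventually.of_forall fun p => ?_)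
    rw [← Real.exp_add, ← Real.exp_add, Real.norm_of_nonneg (Real.exp_pos _).le]
    apply Real.exp_le_exp.2
    -- `r (|s| - |s'|)² ≥ 0` gives `2 r |s s'| ≤ r (s² + s'²)`
    have := mul_nonneg (mul_nonneg (sq_nonneg π) h0) (sq_nonneg (|p.1| - |p.2|))
    have a1 := sq_abs p.1
    have a2 := sq_abs p.2
    rw [← a1, ← a2]
    nlinarith
  · refine Filter.Eventually.of_forall fun p => ?_
    have h := NormedSpace.expSeries_div_hasSum_exp (-2 * π ^ 2 * r * p.1 * p.2 : ℂ)
    rw [← Complex.exp_eq_exp_ℂ] at h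
    have hmul := h.mul_right (Complex.exp (-2 * π * p.1 * x * Complex.I
      - 2 * π * p.2 * y * Complex.I - π ^ 2 * (p.1 ^ 2 + p.2 ^ 2)))
    rw [← Complex.exp_add] at hmul
    have hf : (fun m : ℕ => ((r / 2 : ℝ) : ℂ) ^ m / (m.factorial : ℂ) *
        (fourierIntegrand m x p.1 * fourierIntegrand m y p.2)) = fun m : ℕ =>
        (-2 * π ^ 2 * r * p.1 * p.2 : ℂ) ^ m / (m.factorial : ℂ) *
          Complex.exp (-2 * π * p.1 * x * Complex.I
            - 2 * π * p.2 * y * Complex.I - π ^ 2 * (p.1 ^ 2 + p.2 ^ 2)) := by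
      funext m
      have e : (-2 * π ^ 2 * r * p.1 * p.2 : ℂ) =
          ((r / 2 : ℝ) : ℂ) * (-2 * π * Complex.I * p.1) * (-2 * π * Complex.I * p.2) := by
        push_cast
        linear_combination (-2 * π ^ 2 * r * p.1 * p.2 : ℂ) * Complex.I_sq
      have e' : (-2 * π * p.1 * x * Complex.I
          - 2 * π * p.2 * y * Complex.I - π ^ 2 * (p.1 ^ 2 + p.2 ^ 2) : ℂ) =
          (-2 * π * p.1 * x * Complex.I) + (-2 * π * p.2 * y * Complex.I) +
            (-π * π * p.1 ^ 2) + (-π * π * p.2 ^ 2) := by ring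
      rw [e, e', mul_pow, mul_pow ((r / 2 : ℝ) : ℂ), Complex.exp_add, Complex.exp_add,
        Complex.exp_add, fourierIntegrand, fourierIntegrand]
      ring
    rw [hf]
    refine (congrArg (HasSum _) (congrArg Complex.exp ?_)).mpr hmul
    ring

lemma integral_double_gaussian {r : ℝ} (h0 : 0 ≤ r) (h1 : r < 1) (x y : ℝ) :
    (∫ p : ℝ × ℝ, Complex.exp (-2 * π * p.1 * x * Complex.I - 2 * π * p.2 * y * Complex.I
        - 2 * π ^ 2 * r * p.1 * p.2 - π ^ 2 * (p.1 ^ 2 + p.2 ^ 2))) =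
      ((1 / (π * √(1 - r ^ 2)) * Real.exp (-y ^ 2 - (x - r * y) ^ 2 / (1 - r ^ 2)) : ℝ) : ℂ) := by
  have hr2 : 0 < 1 - r ^ 2 := by nlinarith
  have hpiC : (π : ℂ) ≠ 0 := by exact_mod_cast Real.pi_ne_zero
  have hrC : (1 - r ^ 2 : ℂ) ≠ 0 := by exact_mod_cast hr2.ne'
  have hint : Integrable (fun p : ℝ × ℝ => Complex.exp (-2 * π * p.1 * x * Complex.I
      - 2 * π * p.2 * y * Complex.I
      - 2 * π ^ 2 * r * p.1 * p.2 - π ^ 2 * (p.1 ^ 2 + p.2 ^ 2))) (volume.prod volume) := by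
    have hg := integrable_exp_neg_mul_sq (b := π ^ 2 * (1 - r))
      (mul_pos (by positivity) (by linarith))
    refine (hg.mul_prod hg).mono' (Continuous.aestronglyMeasurable (by fun_prop))
      (Filter.Eventually.of_forall fun p => ?_)
    rw [← Real.exp_add, Complex.norm_exp]
    apply Real.exp_le_exp.2
    have e : (-2 * π * p.1 * x * Complex.I - 2 * π * p.2 * y * Complex.I
        - 2 * π ^ 2 * r * p.1 * p.2 - π ^ 2 * (p.1 ^ 2 + p.2 ^ 2) : ℂ) =
        ((- 2 * π ^ 2 * r * p.1 * p.2 - π ^ 2 * (p.1 ^ 2 + p.2 ^ 2) : ℝ) : ℂ) +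
        ((-2 * π * p.1 * x - 2 * π * p.2 * y : ℝ) : ℂ) * Complex.I := by push_cast; ring
    rw [e, Complex.add_re, Complex.ofReal_re, Complex.re_ofReal_mul, Complex.I_re]
    have := mul_nonneg (mul_nonneg (sq_nonneg π) h0) (sq_nonneg (p.1 + p.2))
    nlinarith
  rw [Measure.volume_eq_prod, integral_prod _ hint]
  have hsqrt : ∀ a : ℝ, 0 < a → (a : ℂ) ^ (1 / 2 : ℂ) = ((√a : ℝ) : ℂ) := by
    intro a ha
    rw [Real.sqrt_eq_rpow, Complex.ofReal_cpow ha.le]; norm_num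
  have hinner : ∀ s : ℝ, (∫ s' : ℝ, Complex.exp (-2 * π * s * x * Complex.I
      - 2 * π * s' * y * Complex.I
      - 2 * π ^ 2 * r * s * s' - π ^ 2 * (s ^ 2 + s' ^ 2))) =
      ((√(1 / π) : ℝ) : ℂ) * Complex.exp (((-(π ^ 2 * (1 - r ^ 2)) : ℝ) : ℂ) * s ^ 2 +
        (-2 * π * Complex.I * (x - r * y)) * s + (-y ^ 2)) := by
    intro s
    have h := integral_cexp_quadratic (b := ((-(π ^ 2) : ℝ) : ℂ))
      (by rw [Complex.ofReal_re]; exact neg_neg_of_pos (by positivity))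
      (-2 * π * y * Complex.I - 2 * π ^ 2 * r * s) (-2 * π * s * x * Complex.I - π ^ 2 * s ^ 2)
    have e1 : (π : ℂ) / -((-(π ^ 2) : ℝ) : ℂ) = ((1 / π : ℝ) : ℂ) := by
      push_cast; field_simp
    rw [e1, hsqrt _ (by positivity)] at h
    convert h using 2
    · ext s'; congr 1; push_cast; ring
    · congr 1
      push_cast
      field_simp
      linear_combination (-(4 * y ^ 2) : ℂ) * Complex.I_sq
  simp_rw [hinner]
  rw [integral_const_mul, integral_cexp_quadratic
    (by rw [Complex.ofReal_re]; exact neg_neg_of_pos (by positivity))]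
  have e1 : (π : ℂ) / -((-(π ^ 2 * (1 - r ^ 2)) : ℝ) : ℂ) = ((1 / (π * (1 - r ^ 2)) : ℝ) : ℂ) := by
    push_cast; field_simp
  rw [e1, hsqrt _ (by positivity)]
  have e2 : (-y ^ 2 - (-2 * π * Complex.I * (x - r * y)) ^ 2 /
      (4 * ((-(π ^ 2 * (1 - r ^ 2)) : ℝ) : ℂ)) : ℂ) =
      ((-y ^ 2 - (x - r * y) ^ 2 / (1 - r ^ 2) : ℝ) : ℂ) := by
    push_cast
    have : (-2 * π * Complex.I * (x - r * y) : ℂ) ^ 2 = - (4 * π ^ 2 * (x - r * y) ^ 2) := by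
      linear_combination (4 * π ^ 2 * (x - r * y) ^ 2 : ℂ) * Complex.I_sq
    rw [this]
    field_simp
  rw [e2, ← Complex.ofReal_exp, ← mul_assoc, ← Complex.ofReal_mul, ← Complex.ofReal_mul]
  congr 2
  rw [← Real.sqrt_mul (by positivity), show 1 / π * (1 / (π * (1 - r ^ 2))) =
    (1 / π) ^ 2 * (1 / (1 - r ^ 2)) by field_simp, Real.sqrt_mul (by positivity),
    Real.sqrt_sq (by positivity), Real.sqrt_div (by norm_num), Real.sqrt_one]
  field_simp

/-- Mehler's formula for the Hermite polynomials in one variable. -/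
lemma hasSum_hermitePoly {r : ℝ} (h0 : 0 ≤ r) (h1 : r < 1) (x y : ℝ) :
    HasSum (fun m : ℕ => (r / 2) ^ m / (m.factorial : ℝ) * (hermitePoly m x * hermitePoly m y))
      (1 / √(1 - r ^ 2) *
        Real.exp (-(r ^ 2 * (x ^ 2 + y ^ 2) - 2 * r * x * y) / (1 - r ^ 2))) := by
  have hr2 : 0 < 1 - r ^ 2 := by nlinarith
  have h := hasSum_fourierIntegrand h0 h1 x y
  rw [integral_double_gaussian h0 h1] at h
  have hmul := h.mul_left (((Real.exp (x ^ 2) * Real.exp (y ^ 2) * π : ℝ)) : ℂ)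
  rw [← Complex.hasSum_ofReal]
  have hterm : (fun m : ℕ => (((r / 2) ^ m / (m.factorial : ℝ) *
      (hermitePoly m x * hermitePoly m y) : ℝ) : ℂ)) = fun m : ℕ =>
      ((Real.exp (x ^ 2) * Real.exp (y ^ 2) * π : ℝ) : ℂ) *
        (((r / 2 : ℝ) : ℂ) ^ m / (m.factorial : ℂ) *
          ((∫ s, fourierIntegrand m x s) * ∫ s, fourierIntegrand m y s)) := by
    funext m
    have hs : ((√π : ℝ) : ℂ) * ((√π : ℝ) : ℂ) = π := by
      rw [← Complex.ofReal_mul, Real.mul_self_sqrt Real.pi_pos.le]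
    have hm : ((-1 : ℂ) ^ m) * (-1) ^ m = 1 := by rw [← mul_pow]; simp
    unfold hermitePoly
    simp only [Complex.ofReal_mul, iteratedDeriv_gaussian]
    rw [← hs]
    push_cast
    linear_combination ((r / 2 : ℂ) ^ m / (m.factorial : ℂ) * Complex.exp (x ^ 2) *
      Complex.exp (y ^ 2) * ((√π : ℝ) : ℂ) * ((√π : ℝ) : ℂ) *
      (∫ s, fourierIntegrand m x s) * ∫ s, fourierIntegrand m y s) * hm
  have hval : 1 / √(1 - r ^ 2) *
        Real.exp (-(r ^ 2 * (x ^ 2 + y ^ 2) - 2 * r * x * y) / (1 - r ^ 2)) =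
      (Real.exp (x ^ 2) * Real.exp (y ^ 2) * π) *
        (1 / (π * √(1 - r ^ 2)) * Real.exp (-y ^ 2 - (x - r * y) ^ 2 / (1 - r ^ 2))) := by
    have : -(r ^ 2 * (x ^ 2 + y ^ 2) - 2 * r * x * y) / (1 - r ^ 2) =
        x ^ 2 + y ^ 2 + (-y ^ 2 - (x - r * y) ^ 2 / (1 - r ^ 2)) := by
      field_simp; ring
    rw [this, Real.exp_add, Real.exp_add]
    field_simp
  rw [hterm, hval, Complex.ofReal_mul (_ * _ * π)]
  exact hmul

/-! ### The kernel in dimension one -/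

/-- The `m`-th term of the Mehler series in dimension one, with the factor `λ^{1/4}` absorbed into
each of the two Hermite functions. -/
def mehlerTerm (lam t x u : ℝ) (m : ℕ) : ℝ :=
  Real.exp (-(2 * m + 1) * lam * t) * (lam ^ (1 / 4 : ℝ) * hermiteFun m (√lam * x)) *
    (lam ^ (1 / 4 : ℝ) * hermiteFun m (√lam * u))

/-- The closed form of the Hermite semigroup kernel in dimension one. -/
def mehlerKernel (lam t x u : ℝ) : ℝ :=
  (2 * π) ^ (-(1 : ℝ) / 2) * Real.sinh (2 * lam * t) ^ (-(1 : ℝ) / 2) * lam ^ ((1 : ℝ) / 2) *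
    Real.exp (-(lam / 4) * Real.tanh (lam * t) * ((x + u) * (x + u)) -
      (lam / 4) * (Real.cosh (lam * t) / Real.sinh (lam * t)) * ((x - u) * (x - u)))

lemma rpow_neg_half {a : ℝ} (ha : 0 ≤ a) : a ^ (-(1 : ℝ) / 2) = 1 / √a := by
  rw [neg_div, Real.rpow_neg ha, Real.sqrt_eq_rpow, ← one_div]

/-- Mehler's formula for the scaled Hermite functions in dimension one: `hasSum_hermitePoly` with
`r = e^{-2λt}`. -/
lemma hasSum_mehlerTerm {lam t : ℝ} (hlam : 0 < lam) (ht : 0 < t) (x u : ℝ) :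
    HasSum (mehlerTerm lam t x u) (mehlerKernel lam t x u) := by
  -- In terms of `q = e^{λt}` every quantity is rational up to square roots; here `r = 1 / q²`.
  obtain ⟨q, hq⟩ : ∃ q, q = Real.exp (lam * t) := ⟨_, rfl⟩
  have hq1 : 1 < q := by rw [hq]; exact Real.one_lt_exp_iff.2 (mul_pos hlam ht)
  have hq0 : 0 < q := by linarith
  have hq2 : 1 < q ^ 2 := one_lt_pow₀ hq1 two_ne_zero
  have hr1 : 1 / q ^ 2 < 1 := by rw [div_lt_one (by positivity)]; exact hq2
  have hexp : Real.exp (-(lam * t)) = 1 / q := by rw [Real.exp_neg, hq, one_div]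
  have hlam4 : lam ^ (1 / 4 : ℝ) * lam ^ (1 / 4 : ℝ) = √lam := by
    rw [← Real.rpow_add hlam, Real.sqrt_eq_rpow]; norm_num
  have hsl : √lam ^ 2 = lam := Real.sq_sqrt hlam.le
  have h := (hasSum_hermitePoly (by positivity) hr1 (√lam * x) (√lam * u)).mul_left
    (1 / q * √lam / √π * Real.exp (-(√lam * x) ^ 2 / 2) * Real.exp (-(√lam * u) ^ 2 / 2))
  have hterm : mehlerTerm lam t x u = fun m : ℕ =>
      (1 / q * √lam / √π * Real.exp (-(√lam * x) ^ 2 / 2) * Real.exp (-(√lam * u) ^ 2 / 2)) *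
        ((1 / q ^ 2 / 2) ^ m / (m.factorial : ℝ) *
          (hermitePoly m (√lam * x) * hermitePoly m (√lam * u))) := by
    funext m
    have e1 : Real.exp (-(2 * m + 1) * lam * t) = (1 / q ^ 2) ^ m * (1 / q) := by
      rw [← hexp, show -(2 * (m : ℝ) + 1) * lam * t = m * (-(lam * t) + -(lam * t)) + -(lam * t)
        by ring, Real.exp_add, Real.exp_nat_mul, Real.exp_add, hexp]
      congr 2; field_simp
    have hc : (0 : ℝ) < 2 ^ m * (m.factorial : ℝ) * √π := by positivity
    have e2 := Real.mul_self_sqrt hc.le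
    unfold mehlerTerm hermiteFun
    rw [e1, rpow_neg_half hc.le, div_pow (1 / q ^ 2)]
    have e3 : 1 / √(2 ^ m * (m.factorial : ℝ) * √π) * (1 / √(2 ^ m * (m.factorial : ℝ) * √π)) =
        1 / (2 ^ m * (m.factorial : ℝ) * √π) := by
      rw [div_mul_div_comm, e2, one_mul]
    calc _ = (1 / q ^ 2) ^ m * (1 / q) * (lam ^ (1 / 4 : ℝ) * lam ^ (1 / 4 : ℝ)) *
          (1 / √(2 ^ m * (m.factorial : ℝ) * √π) * (1 / √(2 ^ m * (m.factorial : ℝ) * √π))) *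
          (hermitePoly m (√lam * x) * hermitePoly m (√lam * u)) *
          (Real.exp (-(√lam * x) ^ 2 / 2) * Real.exp (-(√lam * u) ^ 2 / 2)) := by ring
      _ = _ := by rw [e3, hlam4]; field_simp
  have hsinh : Real.sinh (lam * t) = (q - 1 / q) / 2 := by rw [Real.sinh_eq, hexp, hq]
  have hcosh : Real.cosh (lam * t) = (q + 1 / q) / 2 := by rw [Real.cosh_eq, hexp, hq]
  have hsinh2 : Real.sinh (2 * lam * t) = (1 - (1 / q ^ 2) ^ 2) * q ^ 2 / 2 := by
    rw [mul_assoc, Real.sinh_two_mul, hsinh, hcosh]; field_simp; ring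
  have hq4 : 0 < 1 - (1 / q ^ 2) ^ 2 := by
    have : 0 < 1 / q ^ 2 := by positivity
    nlinarith
  have hval : mehlerKernel lam t x u =
      (1 / q * √lam / √π * Real.exp (-(√lam * x) ^ 2 / 2) * Real.exp (-(√lam * u) ^ 2 / 2)) *
        (1 / √(1 - (1 / q ^ 2) ^ 2) *
          Real.exp (-((1 / q ^ 2) ^ 2 * ((√lam * x) ^ 2 + (√lam * u) ^ 2) -
            2 * (1 / q ^ 2) * (√lam * x) * (√lam * u)) / (1 - (1 / q ^ 2) ^ 2))) := by
    have hpre : 1 / √(2 * π) * (1 / √(Real.sinh (2 * lam * t))) =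
        1 / q / √π * (1 / √(1 - (1 / q ^ 2) ^ 2)) := by
      rw [div_mul_div_comm, ← Real.sqrt_mul (by positivity), hsinh2,
        show 2 * π * ((1 - (1 / q ^ 2) ^ 2) * q ^ 2 / 2) = q ^ 2 * (π * (1 - (1 / q ^ 2) ^ 2)) by ring,
        Real.sqrt_mul (by positivity), Real.sqrt_sq hq0.le, Real.sqrt_mul (by positivity)]
      field_simp
    have hs0 : 0 ≤ Real.sinh (2 * lam * t) := by rw [hsinh2]; positivity
    have hE : -(lam / 4) * Real.tanh (lam * t) * ((x + u) * (x + u)) -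
        (lam / 4) * (Real.cosh (lam * t) / Real.sinh (lam * t)) * ((x - u) * (x - u)) =
        -(√lam * x) ^ 2 / 2 + -(√lam * u) ^ 2 / 2 +
        -((1 / q ^ 2) ^ 2 * ((√lam * x) ^ 2 + (√lam * u) ^ 2) -
            2 * (1 / q ^ 2) * (√lam * x) * (√lam * u)) / (1 - (1 / q ^ 2) ^ 2) := by
      have a1 : q ^ 2 - 1 ≠ 0 := by linarith
      have a2 : q ^ 2 + 1 ≠ 0 := by positivity
      have t1 : Real.tanh (lam * t) = (q ^ 2 - 1) / (q ^ 2 + 1) := by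
        rw [Real.tanh_eq_sinh_div_cosh, hsinh, hcosh]; field_simp
      have t2 : Real.cosh (lam * t) / Real.sinh (lam * t) = (q ^ 2 + 1) / (q ^ 2 - 1) := by
        rw [hsinh, hcosh]; field_simp
      have t3 : 1 - (1 / q ^ 2) ^ 2 = (q ^ 2 - 1) * (q ^ 2 + 1) / q ^ 4 := by field_simp; ring
      have t4 : 2 * (1 / q ^ 2) * (√lam * x) * (√lam * u) = 2 * (1 / q ^ 2) * (lam * (x * u)) := by
        linear_combination (2 * (1 / q ^ 2) * x * u) * hsl
      rw [t1, t2, t3, t4, mul_pow, mul_pow, hsl]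
      field_simp
      ring
    unfold mehlerKernel
    rw [rpow_neg_half (by positivity), rpow_neg_half hs0, hpre, hE, ← Real.sqrt_eq_rpow,
      Real.exp_add, Real.exp_add]
    ring
  rw [hterm, hval]
  exact h

/-! ### Passage to dimension `n` -/

/-- Over a finite product of copies of `ℕ`, a sum of products of absolutely convergent series is the
product of their sums. -/
lemma summable_and_tsum_prod_pi : ∀ (n : ℕ) (f : Fin n → ℕ → ℝ), (∀ i, Summable (f i)) →
    Summable (fun α : Fin n → ℕ => ∏ i, f i (α i)) ∧
      ∑' α : Fin n → ℕ, ∏ i, f i (α i) = ∏ i, ∑' m, f i m := by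
  intro n
  induction n with
  | zero =>
    intro f _
    exact ⟨(hasSum_fintype _).summable, by simp⟩
  | succ n ih =>
    intro f hf
    obtain ⟨h1, h2⟩ := ih (fun i => f i.succ) fun i => hf _
    have hcomp : ∀ p : ℕ × (Fin n → ℕ), ∏ i, f i (Fin.consEquiv (fun _ => ℕ) p i) =
        f 0 p.1 * ∏ i : Fin n, f i.succ (p.2 i) := by
      intro p
      rw [Fin.prod_univ_succ]
      simp [Fin.consEquiv]
    constructor
    · rw [← (Fin.consEquiv (fun _ : Fin (n + 1) => ℕ)).summable_iff]
      exact (summable_mul_of_summable_norm (hf 0).norm h1.norm).congr fun p => (hcomp p).symm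
    · rw [← (Fin.consEquiv (fun _ : Fin (n + 1) => ℕ)).tsum_eq, Fin.prod_univ_succ, ← h2,
        tsum_mul_tsum_of_summable_norm (hf 0).norm h1.norm]
      exact tsum_congr hcomp

/-- Mehler's formula: for `λ, t > 0`,
`Σ_α e^{-(2|α|+n)λt} Φ_α^λ(x) Φ_α^λ(u)
 = (2π)^{-n/2} (sinh 2λt)^{-n/2} λ^{n/2} e^{-(λ/4) tanh(λt)|x+u|² - (λ/4) coth(λt)|x-u|²}`. -/
theorem mehler_formula {n : ℕ} (lam t : ℝ) (hlam : 0 < lam) (ht : 0 < t)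
    (x u : Fin n → ℝ) :
    (∑' α : Fin n → ℕ,
        Real.exp (-(2 * (∑ i, (α i : ℝ)) + n) * lam * t) *
          hermiteFunLam lam α x * hermiteFunLam lam α u) =
      (2 * π) ^ (-(n : ℝ) / 2) * Real.sinh (2 * lam * t) ^ (-(n : ℝ) / 2) *
        lam ^ ((n : ℝ) / 2) *
        Real.exp (-(lam / 4) * Real.tanh (lam * t) * dot (x + u) (x + u) -
          (lam / 4) * (Real.cosh (lam * t) / Real.sinh (lam * t)) * dot (x - u) (x - u)) := by
  have hterm : ∀ α : Fin n → ℕ, Real.exp (-(2 * (∑ i, (α i : ℝ)) + n) * lam * t) *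
      hermiteFunLam lam α x * hermiteFunLam lam α u =
      ∏ i, mehlerTerm lam t (x i) (u i) (α i) := by
    intro α
    have h4 : lam ^ ((n : ℝ) / 4) = ∏ _i : Fin n, lam ^ (1 / 4 : ℝ) := by
      rw [Finset.prod_const, Finset.card_fin, ← Real.rpow_mul_natCast hlam.le]
      congr 1; ring
    have he : -(2 * (∑ i, (α i : ℝ)) + n) * lam * t = ∑ i, -(2 * (α i : ℝ) + 1) * lam * t := by
      simp only [← Finset.sum_mul, Finset.sum_neg_distrib, Finset.sum_add_distrib,
        ← Finset.mul_sum]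
      simp
    unfold hermiteFunLam hermiteFunN mehlerTerm
    rw [he, Real.exp_sum, h4]
    simp only [Finset.prod_mul_distrib]
  simp_rw [hterm]
  have hs := fun i => hasSum_mehlerTerm hlam ht (x i) (u i)
  rw [(summable_and_tsum_prod_pi n _ fun i => (hs i).summable).2]
  simp_rw [fun i => (hs i).tsum_eq]
  have hpow : ∀ a c : ℝ, 0 ≤ a → a ^ ((n : ℝ) * c) = (a ^ c) ^ n := by
    intro a c ha
    rw [mul_comm, Real.rpow_mul_natCast ha]
  have hs0 : 0 ≤ Real.sinh (2 * lam * t) := Real.sinh_nonneg_iff.2 (by positivity)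
  unfold mehlerKernel dot
  rw [Finset.mul_sum, Finset.mul_sum, ← Finset.sum_sub_distrib, Real.exp_sum,
    show -(n : ℝ) / 2 = n * (-1 / 2) by ring, show (n : ℝ) / 2 = n * (1 / 2) by ring,
    hpow _ _ (by positivity), hpow _ _ hs0, hpow _ _ hlam.le]
  rw [Finset.prod_mul_distrib, Finset.prod_const, Finset.card_fin, mul_pow, mul_pow]
  rfl
end
end
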